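/- Define f : ℝ → ℝ by f(0) = 0 and f(x) = |x| sin(log|x|) for x ≠ 0, and let Ω = {(x, y) ∈ ℝ² : y > f(x)}. Then f is Lipschitz, and the limit lim_{ε→0⁺} H¹(Ω ∩ ∂B_ε(0)) / H¹(∂B_ε(0)) does not exist; in particular, the quantity Γ(p) defined by this limit fails to exist at the boundary point p = 0 of Ω. -/

import Mathlib

open MeasureTheory Metric Filter Real
open scoped Topology ENNReal NNReal

noncomputable section

/-!
The function `|x| sin (log |x|)` is homogeneous under the dilation by `exp (-2π)`, so its epigraph
is self-similar and the proportion of the circle of radius `ε` inside it is a multiplicatively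
periodic function of `ε`. Such a function has a limit at `0` only if it is constant. Rescaling the
circle of radius `exp s` to the unit circle replaces `sin (log |x|)` by `sin (log |x| + s)`, so the
radii `exp (π / 2)` and `exp (-π / 2)` lead to the graphs of `|x| cos (log |x|)` and
`-|x| cos (log |x|)`. Where `1 / √2 ≤ |x| ≤ 1` the first graph lies strictly above the second, and
on the rest of the unit circle `|x| < |y|`, so that being above either graph means `0 < y`. Hence
the second proportion is at least the first, and strictly larger because of an arc around `(1, 0)`
that lies between the graphs.
-/

open scoped Pointwise

section LogRadial

variable {E F : Type*} [SeminormedAddCommGroup E] [SeminormedAddCommGroup F] [NormedSpace ℝ F]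

/-- The radial map with logarithmic profile `g`; `g = sin` gives the function `|x| sin (log |x|)` on
`ℝ`. At `x = 0` the factor `‖x‖` makes the value `0`, whatever `log 0` is. -/
def logRadial (g : ℝ → F) (x : E) : F := ‖x‖ • g (log ‖x‖)

lemma mul_abs_log_sub_log_le {a b : ℝ} (hb : 0 < b) (hba : b ≤ a) :
    b * |log a - log b| ≤ a - b := by
  have ha : 0 < a := hb.trans_le hba
  rw [abs_of_nonneg (sub_nonneg.2 (log_le_log hb hba)), ← log_div ha.ne' hb.ne']
  calc b * log (a / b) ≤ b * (a / b - 1) := by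
        gcongr
        exact log_le_sub_one_of_pos (by positivity)
    _ = a - b := by field_simp

lemma norm_smul_comp_log_sub_le {g : ℝ → F} {K M : ℝ≥0} (hg : LipschitzWith K g)
    (hM : ∀ t, ‖g t‖ ≤ M) {a b : ℝ} (hb : 0 ≤ b) (hba : b ≤ a) :
    ‖a • g (log a) - b • g (log b)‖ ≤ (M + K) * (a - b) := by
  rcases hb.eq_or_lt with rfl | hb
  · rw [zero_smul, sub_zero, sub_zero, norm_smul, norm_of_nonneg hba, mul_comm]
    gcongr
    exact (hM _).trans (le_add_of_nonneg_right K.coe_nonneg)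
  calc ‖a • g (log a) - b • g (log b)‖
      = ‖(a - b) • g (log a) + b • (g (log a) - g (log b))‖ := by
        congr 1
        module
    _ ≤ ‖(a - b) • g (log a)‖ + ‖b • (g (log a) - g (log b))‖ := norm_add_le _ _
    _ = (a - b) * ‖g (log a)‖ + b * ‖g (log a) - g (log b)‖ := by
        rw [norm_smul, norm_smul, norm_of_nonneg (sub_nonneg.2 hba), norm_of_nonneg hb.le]
    _ ≤ (a - b) * M + b * (K * |log a - log b|) := by
        gcongr
        · exact hM _
        · exact hg.norm_sub_le _ _
    _ = (a - b) * M + K * (b * |log a - log b|) := by ring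
    _ ≤ (a - b) * M + K * (a - b) := by
        gcongr
        exact mul_abs_log_sub_log_le hb hba
    _ = (M + K) * (a - b) := by ring

lemma lipschitzWith_logRadial {g : ℝ → F} {K M : ℝ≥0} (hg : LipschitzWith K g)
    (hM : ∀ t, ‖g t‖ ≤ M) : LipschitzWith (M + K) (logRadial g : E → F) := by
  refine LipschitzWith.of_dist_le_mul fun x y => ?_
  wlog hyx : ‖y‖ ≤ ‖x‖ generalizing x y
  · rw [dist_comm, dist_comm x]
    exact this y x (le_of_not_ge hyx)
  rw [dist_eq_norm, dist_eq_norm, NNReal.coe_add]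
  calc ‖logRadial g x - logRadial g y‖ ≤ (M + K) * (‖x‖ - ‖y‖) :=
        norm_smul_comp_log_sub_le hg hM (norm_nonneg y) hyx
    _ ≤ (M + K) * ‖x - y‖ := by
        gcongr
        exact norm_sub_norm_le x y

lemma norm_logRadial_le {g : ℝ → F} {M : ℝ} (hM : ∀ t, ‖g t‖ ≤ M) (x : E) :
    ‖logRadial g x‖ ≤ ‖x‖ * M := by
  rw [logRadial, norm_smul, norm_norm]
  gcongr
  exact hM _

end LogRadial

lemma smul_logRadial_inv_smul {E F : Type*} [NormedAddCommGroup E] [NormedSpace ℝ E]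
    [SeminormedAddCommGroup F] [NormedSpace ℝ F] (g : ℝ → F) {c : ℝ} (hc : 0 < c) (x : E) :
    c • logRadial g (c⁻¹ • x) = logRadial (fun t => g (t - log c)) x := by
  rcases eq_or_ne x 0 with rfl | hx
  · simp [logRadial]
  · rw [logRadial, logRadial, norm_smul, norm_inv, norm_of_nonneg hc.le,
      log_mul (inv_ne_zero hc.ne') (norm_ne_zero_iff.2 hx), log_inv, smul_smul,
      mul_inv_cancel_left₀ hc.ne', neg_add_eq_sub]

section SphereRatio

variable {E : Type*} [NormedAddCommGroup E] [MeasurableSpace E] [BorelSpace E]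

/-- The proportion of the sphere of radius `ε` about the origin contained in `Ω`, with respect to
`d`-dimensional Hausdorff measure. Its limit as `ε → 0⁺`, for `d = 1` in the plane, is `Γ(0)`.
The value is junk unless the sphere has finite nonzero measure. -/
def sphereRatio (d : ℝ) (Ω : Set E) (ε : ℝ) : ℝ :=
  (μH[d] (Ω ∩ sphere 0 ε)).toReal / (μH[d] (sphere (0 : E) ε)).toReal

variable {d : ℝ}

lemma sphereRatio_lt_sphereRatio {Ω Ω' : Set E} {ε : ℝ}
    (hfin : μH[d] (sphere (0 : E) ε) ≠ ∞)
    (h : μH[d] (Ω ∩ sphere 0 ε) < μH[d] (Ω' ∩ sphere 0 ε)) :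
    sphereRatio d Ω ε < sphereRatio d Ω' ε := by
  have hle : μH[d] (Ω' ∩ sphere 0 ε) ≤ μH[d] (sphere (0 : E) ε) :=
    measure_mono Set.inter_subset_right
  have hpos : 0 < (μH[d] (sphere (0 : E) ε)).toReal :=
    ENNReal.toReal_pos (h.trans_le hle).ne_bot hfin
  have hlt := ENNReal.toReal_strict_mono (hle.trans_lt hfin.lt_top).ne h
  exact div_lt_div_of_pos_right hlt hpos

variable [NormedSpace ℝ E]

lemma sphereRatio_smul (hd : 0 ≤ d) (Ω : Set E) {c : ℝ} (hc : 0 < c) (ε : ℝ) :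
    sphereRatio d (c • Ω) (c * ε) = sphereRatio d Ω ε := by
  have hsphere : sphere (0 : E) (c * ε) = c • sphere (0 : E) ε := by
    rw [smul_sphere' hc.ne', smul_zero, norm_of_nonneg hc.le]
  have hfactor : ((‖c‖₊ ^ d : ℝ≥0) : ℝ) ≠ 0 := by
    exact_mod_cast (NNReal.rpow_pos (nnnorm_pos.2 hc.ne')).ne'
  rw [sphereRatio, hsphere, ← Set.smul_set_inter₀ hc.ne',
    Measure.hausdorffMeasure_smul₀ hd hc.ne', Measure.hausdorffMeasure_smul₀ hd hc.ne']
  simp only [ENNReal.smul_def, smul_eq_mul, ENNReal.toReal_mul, ENNReal.coe_toReal]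
  exact mul_div_mul_left _ _ hfactor

lemma sphereRatio_eq_of_tendsto {Ω : Set E} {c L ε : ℝ} (hd : 0 ≤ d) (hc₀ : 0 < c)
    (hc₁ : c < 1) (hΩ : c • Ω = Ω) (hL : Tendsto (sphereRatio d Ω) (𝓝[>] 0) (𝓝 L))
    (hε : 0 < ε) :
    sphereRatio d Ω ε = L := by
  have hconst (n : ℕ) : sphereRatio d Ω (c ^ n * ε) = sphereRatio d Ω ε := by
    induction n with
    | zero => rw [pow_zero, one_mul]
    | succ n ih =>
      rw [pow_succ', mul_assoc, ← ih]
      nth_rw 1 [← hΩ]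
      exact sphereRatio_smul hd Ω hc₀ _
  have hradii : Tendsto (fun n : ℕ => c ^ n * ε) atTop (𝓝[>] 0) := by
    refine tendsto_nhdsWithin_iff.2 ⟨?_, .of_forall fun n => mul_pos (pow_pos hc₀ n) hε⟩
    simpa using (tendsto_pow_atTop_nhds_zero_of_lt_one hc₀.le hc₁).mul_const ε
  exact tendsto_nhds_unique tendsto_const_nhds ((hL.comp hradii).congr hconst)

end SphereRatio

section HausdorffMeasure

/-- The distance to a point of `s ∩ U` is `1`-Lipschitz, and by connectedness it maps `s ∩ U` onto a
set containing an interval. -/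
lemma hausdorffMeasure_inter_pos_of_isPreconnected {X : Type*} [MetricSpace X] [MeasurableSpace X]
    [BorelSpace X] {s U : Set X} (hs : IsPreconnected s) (hs' : s.Nontrivial) (hU : IsOpen U)
    (hsU : (s ∩ U).Nonempty) : 0 < μH[1] (s ∩ U) := by
  obtain ⟨p, hps, hpU⟩ := hsU
  obtain ⟨q, hqs, hqp⟩ := hs'.exists_ne p
  obtain ⟨r, hr, hball⟩ := Metric.isOpen_iff.1 hU p hpU
  have hlip : LipschitzWith 1 fun x => dist x p := LipschitzWith.dist_left p
  have hdist : Set.Icc 0 (dist q p) ⊆ (fun x => dist x p) '' s := by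
    simpa using hs.intermediate_value hps hqs hlip.continuous.continuousOn
  have himage : Set.Ico 0 (min (dist q p) r) ⊆ (fun x => dist x p) '' (s ∩ U) := by
    rintro t ⟨ht₀, ht⟩
    obtain ⟨x, hxs, rfl⟩ := hdist ⟨ht₀, (ht.trans_le (min_le_left _ _)).le⟩
    exact ⟨x, ⟨hxs, hball (ht.trans_le (min_le_right _ _))⟩, rfl⟩
  calc 0 < ENNReal.ofReal (min (dist q p) r - 0) := by
        simpa using And.intro hqp hr
    _ = μH[1] (Set.Ico 0 (min (dist q p) r)) := by
        rw [hausdorffMeasure_real, Real.volume_Ico]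
    _ ≤ μH[1] ((fun x => dist x p) '' (s ∩ U)) := measure_mono himage
    _ ≤ μH[1] (s ∩ U) := by
        simpa using hlip.hausdorffMeasure_image_le zero_le_one (s ∩ U)

lemma sphere_nontrivial {E : Type*} [NormedAddCommGroup E] [NormedSpace ℝ E] [Nontrivial E] (x : E)
    {r : ℝ} (hr : 0 < r) : (sphere x r).Nontrivial := by
  obtain ⟨v, hv⟩ := (NormedSpace.sphere_nonempty (E := E) (x := 0)).2 hr.le
  refine ⟨x + v, by simpa using hv, x - v, by simpa using hv, fun h => ?_⟩
  have hneg : v = -v := by simpa [sub_eq_add_neg] using h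
  exact ne_neg_of_mem_sphere ℝ hr.ne' ⟨v, hv⟩ (Subtype.ext hneg)

variable {E : Type*} [NormedAddCommGroup E] [MeasurableSpace E] [BorelSpace E]

lemma hausdorffMeasure_sphere_inter_pos [NormedSpace ℝ E] (hE : 1 < Module.rank ℝ E) {x : E}
    {r : ℝ} (hr : 0 < r) {U : Set E} (hU : IsOpen U) (hne : (sphere x r ∩ U).Nonempty) :
    0 < μH[1] (sphere x r ∩ U) := by
  have : Nontrivial E := (rank_pos_iff_nontrivial (R := ℝ)).1 (zero_lt_one.trans hE)
  exact hausdorffMeasure_inter_pos_of_isPreconnected (isPreconnected_sphere hE x r)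
    (sphere_nontrivial x hr) hU hne

lemma hausdorffMeasure_sphere_complex_lt_top (z : ℂ) (r : ℝ) : μH[1] (sphere z r) < ∞ := by
  rcases lt_or_ge r 0 with hr | hr
  · simp [sphere_eq_empty_of_neg hr]
  calc μH[1] (sphere z r) = μH[1] (circleMap z r '' Set.Ioc 0 (2 * π)) := by
        rw [image_circleMap_Ioc, abs_of_nonneg hr]
    _ ≤ (Real.nnabs r : ℝ≥0∞) ^ (1 : ℝ) * μH[1] (Set.Ioc 0 (2 * π)) :=
        (lipschitzWith_circleMap z r).hausdorffMeasure_image_le zero_le_one _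
    _ < ∞ := by
        rw [hausdorffMeasure_real, Real.volume_Ioc]
        exact ENNReal.mul_lt_top (by simp) ENNReal.ofReal_lt_top

lemma hausdorffMeasure_sphere_lt_top [InnerProductSpace ℝ E] (hE : Module.finrank ℝ E = 2)
    (x : E) (r : ℝ) : μH[1] (sphere x r) < ∞ := by
  have : FiniteDimensional ℝ E := Module.finite_of_finrank_eq_succ hE
  let e : E ≃ₗᵢ[ℝ] ℂ := ((stdOrthonormalBasis ℝ E).reindex (finCongr hE)).equiv
    Complex.orthonormalBasisOneI (Equiv.refl _)
  rw [← e.toIsometryEquiv.hausdorffMeasure_image, IsometryEquiv.image_sphere]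
  exact hausdorffMeasure_sphere_complex_lt_top _ _

end HausdorffMeasure

section StrictEpigraph

/-- The open region of the plane strictly above the graph of `f`. -/
def strictEpigraph (f : ℝ → ℝ) : Set (EuclideanSpace ℝ (Fin 2)) := {q | f (q 0) < q 1}

lemma isOpen_strictEpigraph {f : ℝ → ℝ} (hf : Continuous f) : IsOpen (strictEpigraph f) :=
  isOpen_lt (by fun_prop) (by fun_prop)

lemma smul_strictEpigraph (f : ℝ → ℝ) {c : ℝ} (hc : 0 < c) :
    c • strictEpigraph f = strictEpigraph fun x => c • f (c⁻¹ • x) := by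
  ext q
  simp [Set.mem_smul_set_iff_inv_smul_mem₀ hc.ne', strictEpigraph, lt_inv_mul_iff₀ hc]

lemma smul_strictEpigraph_logRadial (g : ℝ → ℝ) {c : ℝ} (hc : 0 < c) :
    c • strictEpigraph (logRadial g) = strictEpigraph (logRadial fun t => g (t - log c)) := by
  rw [smul_strictEpigraph _ hc]
  exact congrArg strictEpigraph (funext (smul_logRadial_inv_smul g hc))

lemma sphereRatio_strictEpigraph_logRadial_add_eq_of_tendsto {g : ℝ → ℝ} {d T L : ℝ} (hd : 0 ≤ d)
    (hT : 0 < T) (hg : Function.Periodic g T)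
    (hL : Tendsto (sphereRatio d (strictEpigraph (logRadial g))) (𝓝[>] 0) (𝓝 L)) (s : ℝ) :
    sphereRatio d (strictEpigraph (logRadial fun t => g (t + s))) 1 = L := by
  have hself : exp (-T) • strictEpigraph (logRadial g) = strictEpigraph (logRadial g) := by
    simp only [smul_strictEpigraph_logRadial g (exp_pos _), log_exp, sub_neg_eq_add, hg _]
  calc sphereRatio d (strictEpigraph (logRadial fun t => g (t + s))) 1
      = sphereRatio d (exp (-s) • strictEpigraph (logRadial g)) (exp (-s) * exp s) := by
        rw [smul_strictEpigraph_logRadial g (exp_pos _), ← exp_add, neg_add_cancel, exp_zero,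
          log_exp]
        simp only [sub_neg_eq_add]
    _ = sphereRatio d (strictEpigraph (logRadial g)) (exp s) := sphereRatio_smul hd _ (exp_pos _) _
    _ = L := sphereRatio_eq_of_tendsto hd (exp_pos _) (exp_lt_one_iff.2 (neg_lt_zero.2 hT)) hself hL
        (exp_pos s)

variable {u v : ℝ → ℝ}

lemma mem_unitSphere_iff (q : EuclideanSpace ℝ (Fin 2)) :
    q ∈ sphere 0 1 ↔ q 0 ^ 2 + q 1 ^ 2 = 1 := by
  simp [EuclideanSpace.norm_eq, Fin.sum_univ_two]

lemma strictEpigraph_inter_unitSphere_subset (hu : ∀ x, -|x| ≤ u x) (hv : ∀ x, v x ≤ |x|)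
    (hvu : ∀ x, 1 / 2 ≤ x ^ 2 → x ^ 2 ≤ 1 → v x ≤ u x) :
    strictEpigraph u ∩ sphere 0 1 ⊆ strictEpigraph v ∩ sphere 0 1 := by
  rintro q ⟨hq : u (q 0) < q 1, hsphere⟩
  refine ⟨show v (q 0) < q 1 from ?_, hsphere⟩
  rw [mem_unitSphere_iff] at hsphere
  rcases le_or_gt (1 / 2) (q 0 ^ 2) with hx | hx
  · exact (hvu _ hx (by linarith [sq_nonneg (q 1)])).trans_lt hq
  · have habs : |q 0| < |q 1| := sq_lt_sq.1 (by linarith)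
    have hy : 0 < q 1 := by
      by_contra! hy
      linarith [hu (q 0), abs_of_nonpos hy]
    linarith [hv (q 0), abs_of_pos hy]

lemma hausdorffMeasure_strictEpigraph_inter_sphere_lt {r : ℝ} (hr : 0 < r) (hu : Continuous u)
    (hv : Continuous v) (huv : strictEpigraph u ∩ sphere 0 r ⊆ strictEpigraph v ∩ sphere 0 r)
    (hne : ∃ q ∈ sphere (0 : EuclideanSpace ℝ (Fin 2)) r, v (q 0) < q 1 ∧ q 1 < u (q 0)) :
    μH[1] (strictEpigraph u ∩ sphere 0 r) < μH[1] (strictEpigraph v ∩ sphere 0 r) := by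
  let between : Set (EuclideanSpace ℝ (Fin 2)) := {q | v (q 0) < q 1} ∩ {q | q 1 < u (q 0)}
  have hopen : IsOpen between :=
    (isOpen_strictEpigraph hv).inter (isOpen_lt (by fun_prop) (by fun_prop))
  have hpos : 0 < μH[1] (sphere (0 : EuclideanSpace ℝ (Fin 2)) r ∩ between) :=
    hausdorffMeasure_sphere_inter_pos (Module.lt_rank_of_lt_finrank (by simp)) hr hopen hne
  have hmeas : MeasurableSet (strictEpigraph u ∩ sphere 0 r) :=
    (isOpen_strictEpigraph hu).measurableSet.inter isClosed_sphere.measurableSet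
  have hfin : μH[1] (strictEpigraph u ∩ sphere 0 r) ≠ ∞ :=
    ((measure_mono Set.inter_subset_right).trans_lt
      (hausdorffMeasure_sphere_lt_top finrank_euclideanSpace_fin 0 r)).ne
  have hdisj : Disjoint (strictEpigraph u ∩ sphere 0 r) (sphere 0 r ∩ between) :=
    Set.disjoint_left.2 fun q ⟨(hqu : u (q 0) < q 1), _⟩ hq => hqu.asymm hq.2.2
  calc μH[1] (strictEpigraph u ∩ sphere 0 r)
      < μH[1] (strictEpigraph u ∩ sphere 0 r) + μH[1] (sphere 0 r ∩ between) :=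
        ENNReal.lt_add_right hfin hpos.ne'
    _ = μH[1] ((strictEpigraph u ∩ sphere 0 r) ∪ (sphere 0 r ∩ between)) :=
        (measure_union' hdisj hmeas).symm
    _ ≤ μH[1] (strictEpigraph v ∩ sphere 0 r) :=
        measure_mono (Set.union_subset huv fun _ hq => ⟨hq.2.1, hq.1⟩)

end StrictEpigraph

lemma cos_log_nonneg {x : ℝ} (hx : 1 / 2 ≤ x ^ 2) (hx' : x ^ 2 ≤ 1) : 0 ≤ cos (log x) := by
  have hlog_sq : log (x ^ 2) = 2 * log x := by simp
  have hle : log (x ^ 2) ≤ 0 := log_nonpos (by linarith) hx'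
  have hge : -1 ≤ log (x ^ 2) := by
    calc -1 = 1 - (1 / 2 : ℝ)⁻¹ := by norm_num
      _ ≤ 1 - (x ^ 2)⁻¹ := by gcongr
      _ ≤ log (x ^ 2) := one_sub_inv_le_log_of_pos (by linarith)
  exact cos_nonneg_of_mem_Icc ⟨by linarith [pi_gt_three], by linarith [pi_pos]⟩

lemma sphereRatio_cos_lt_sphereRatio_neg_cos :
    sphereRatio 1 (strictEpigraph (logRadial cos)) 1 <
      sphereRatio 1 (strictEpigraph (logRadial fun t => -cos t)) 1 := by
  have hneg : (logRadial fun t => -cos t) = fun x : ℝ => -logRadial cos x :=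
    funext fun x => smul_neg ‖x‖ (cos (log ‖x‖))
  have hbound (x : ℝ) : -|x| ≤ logRadial cos x :=
    neg_le_of_abs_le (by simpa using norm_logRadial_le (g := cos) abs_cos_le_one x)
  have hcont : Continuous (logRadial cos : ℝ → ℝ) :=
    (lipschitzWith_logRadial lipschitzWith_cos (M := 1) abs_cos_le_one).continuous
  have hnonneg (x : ℝ) (hx : 1 / 2 ≤ x ^ 2) (hx' : x ^ 2 ≤ 1) : 0 ≤ logRadial cos x :=
    mul_nonneg (norm_nonneg x) (by simpa using cos_log_nonneg hx hx')
  have hsubset : strictEpigraph (logRadial cos) ∩ sphere 0 1 ⊆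
      strictEpigraph (fun x => -logRadial cos x) ∩ sphere 0 1 :=
    strictEpigraph_inter_unitSphere_subset hbound (fun x => neg_le.1 (hbound x))
      fun x hx hx' => neg_le_self (hnonneg x hx hx')
  have hbetween : ∃ q ∈ sphere (0 : EuclideanSpace ℝ (Fin 2)) 1,
      -logRadial cos (q 0) < q 1 ∧ q 1 < logRadial cos (q 0) :=
    ⟨!₂[1, 0], by rw [mem_unitSphere_iff]; simp, by simp [logRadial]⟩
  rw [hneg]
  exact sphereRatio_lt_sphereRatio
    (hausdorffMeasure_sphere_lt_top finrank_euclideanSpace_fin 0 1).ne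
    (hausdorffMeasure_strictEpigraph_inter_sphere_lt zero_lt_one hcont hcont.neg hsubset
      hbetween)

/-- **Remark 2.3.** For the Lipschitz function `f(x) = |x| sin(log|x|)`
(with `f(0) = 0`) and the epigraph domain `Ω = {(x, y) : y > f(x)} ⊆ ℝ²`, the limit
`lim_{ε→0⁺} H¹(Ω ∩ ∂B_ε(0)) / H¹(∂B_ε(0))` defining `Γ` fails to exist at `p = 0`. -/
theorem gamma_may_fail_to_exist
    (f : ℝ → ℝ) (hf : f = fun x => if x = 0 then 0 else |x| * Real.sin (Real.log |x|))
    (Ω : Set (EuclideanSpace ℝ (Fin 2))) (hΩ : Ω = {q : EuclideanSpace ℝ (Fin 2) | f (q 0) < q 1}) :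
    (∃ K : ℝ≥0, LipschitzWith K f) ∧
      ¬ ∃ L : ℝ, Tendsto (fun ε : ℝ =>
          (μH[(1 : ℝ)] (Ω ∩ sphere (0 : EuclideanSpace ℝ (Fin 2)) ε)).toReal /
            (μH[(1 : ℝ)] (sphere (0 : EuclideanSpace ℝ (Fin 2)) ε)).toReal)
        (𝓝[>] 0) (𝓝 L) := by
  have hf_eq : f = logRadial sin := by
    rw [hf]
    funext x
    split_ifs with h <;> simp [logRadial, h]
  subst hf_eq hΩ
  refine ⟨⟨1 + 1, lipschitzWith_logRadial lipschitzWith_sin abs_sin_le_one⟩, ?_⟩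
  rintro ⟨L, hL⟩
  have hratio (s : ℝ) : sphereRatio 1 (strictEpigraph (logRadial fun t => sin (t + s))) 1 = L :=
    sphereRatio_strictEpigraph_logRadial_add_eq_of_tendsto zero_le_one two_pi_pos sin_periodic hL s
  have hcos := hratio (π / 2)
  have hneg_cos := hratio (-(π / 2))
  simp only [sin_add_pi_div_two] at hcos
  simp only [← sub_eq_add_neg, sin_sub_pi_div_two] at hneg_cos
  exact sphereRatio_cos_lt_sphereRatio_neg_cos.ne (hcos.trans hneg_cos.symm)
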